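/- Let C > 0 and ε₀ > 0 be real constants. Let ρ : ℝ³ × ℝ → ℝ be a smooth function for which there is a compact set K ⊆ ℝ³ with supp ρ(·,t) ⊆ K for every t. Define the retarded scalar potential V(x,t) = (1/(4πε₀)) ∫_{ℝ³} ρ(y, t − |x−y|/C)/|x−y| dy. Then V is twice differentiable and satisfies the inhomogeneous wave equation Δ_x V(x,t) − (1/C²) ∂²V/∂t²(x,t) = −ρ(x,t)/ε₀ for all (x,t) ∈ ℝ³ × ℝ. -/

import Mathlib

noncomputable section

open MeasureTheory Real

abbrev V3 := Fin 3 → ℝ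

def dot3 (a b : V3) : ℝ := ∑ i, a i * b i

def norm3 (a : V3) : ℝ := Real.sqrt (dot3 a a)

def cross3 (a b : V3) : V3 :=
  ![a 1 * b 2 - a 2 * b 1, a 2 * b 0 - a 0 * b 2, a 0 * b 1 - a 1 * b 0]

/-- Spatial partial derivative in direction `i` of a time-dependent field. -/
def pdS {F : Type*} [NormedAddCommGroup F] [NormedSpace ℝ F]
    (i : Fin 3) (f : V3 × ℝ → F) (p : V3 × ℝ) : F :=
  fderiv ℝ (fun y => f (y, p.2)) p.1 (Pi.single i 1)

/-- Partial time derivative of a time-dependent field. -/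
def pdT {F : Type*} [NormedAddCommGroup F] [NormedSpace ℝ F]
    (f : V3 × ℝ → F) (p : V3 × ℝ) : F :=
  deriv (fun s => f (p.1, s)) p.2

/-- Spatial gradient. -/
def grad (f : V3 × ℝ → ℝ) (p : V3 × ℝ) : V3 := fun i => pdS i f p

/-- Spatial divergence. -/
def divg (A : V3 × ℝ → V3) (p : V3 × ℝ) : ℝ := ∑ i, pdS i (fun q => A q i) p

/-- Spatial curl. -/
def curl (A : V3 × ℝ → V3) (p : V3 × ℝ) : V3 :=
  ![pdS 1 (fun q => A q 2) p - pdS 2 (fun q => A q 1) p,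
    pdS 2 (fun q => A q 0) p - pdS 0 (fun q => A q 2) p,
    pdS 0 (fun q => A q 1) p - pdS 1 (fun q => A q 0) p]

/-- Spatial Laplacian (componentwise for vector-valued fields). -/
def lap {F : Type*} [NormedAddCommGroup F] [NormedSpace ℝ F]
    (f : V3 × ℝ → F) (p : V3 × ℝ) : F :=
  ∑ i, pdS i (pdS i f) p

/-- Spatial directional derivative `(a·∇)f`. -/
def dirS {F : Type*} [NormedAddCommGroup F] [NormedSpace ℝ F]
    (a : V3) (f : V3 × ℝ → F) (p : V3 × ℝ) : F :=
  fderiv ℝ (fun y => f (y, p.2)) p.1 a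


/-- The retarded scalar potential `V(x,t) = (1/(4πε₀)) ∫ ρ(y, t − |x−y|/C)/|x−y| dy`. -/
def Vret (C ε₀ : ℝ) (ρ : V3 × ℝ → ℝ) (p : V3 × ℝ) : ℝ :=
  (1 / (4 * π * ε₀)) * ∫ y : V3, (norm3 (p.1 - y))⁻¹ * ρ (y, p.2 - norm3 (p.1 - y) / C)

/-! Substituting `y = x - z`, the potential is a superposition of delayed translates of `ρ`, so all
derivatives can be put on the smooth factor `ρ`. To move the space derivatives onto the kernel,
soften `|z|` to `s = √(|z|² + δ²)` in the kernel *and* in the delay: integration by parts then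
meets neither a singularity nor a boundary term. The wave equation for the softened potential
holds up to the sources `3 δ² / s⁵` and `3 δ² / s⁴`; as `δ → 0` the former is an approximate
identity of mass `4 π` and the latter vanishes. -/

open Filter Module Topology

section DirDeriv

variable {E F : Type*} [NormedAddCommGroup E] [NormedSpace ℝ E] [NormedAddCommGroup F]
  [NormedSpace ℝ F] {f : E → F}

/-- The derivative of `f` in the constant direction `v`, as a function of the base point. -/
def dirDeriv (v : E) (f : E → F) (x : E) : F := fderiv ℝ f x v

lemma contDiff_dirDeriv {m n : WithTop ℕ∞} (hf : ContDiff ℝ n f) (hmn : m + 1 ≤ n) (v : E) :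
    ContDiff ℝ m (dirDeriv v f) :=
  (hf.fderiv_right hmn).clm_apply contDiff_const

lemma tsupport_dirDeriv_subset (v : E) : tsupport (dirDeriv v f) ⊆ tsupport f :=
  tsupport_fderiv_apply_subset ℝ v

lemma dirDeriv_dirDeriv_apply (hf : ContDiff ℝ 2 f) (v w x : E) :
    dirDeriv v (dirDeriv w f) x = fderiv ℝ (fderiv ℝ f) x v w := by
  have hd : DifferentiableAt ℝ (fderiv ℝ f) x :=
    (hf.fderiv_right (m := 1) one_add_one_eq_two.le).differentiable one_ne_zero x
  unfold dirDeriv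
  simp [fderiv_clm_apply hd (differentiableAt_const w)]

lemma dirDeriv_comm (hf : ContDiff ℝ 2 f) (v w : E) :
    dirDeriv v (dirDeriv w f) = dirDeriv w (dirDeriv v f) := by
  ext x
  rw [dirDeriv_dirDeriv_apply hf, dirDeriv_dirDeriv_apply hf]
  exact hf.contDiffAt.isSymmSndFDerivAt (by simp) v w

lemma dirDeriv_mul {f g : E → ℝ} {x : E} (hf : DifferentiableAt ℝ f x)
    (hg : DifferentiableAt ℝ g x) (v : E) :
    dirDeriv v (fun y => f y * g y) x = f x * dirDeriv v g x + g x * dirDeriv v f x := by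
  simp [dirDeriv, fderiv_fun_mul hf hg]

lemma dirDeriv_const_smul (c : ℝ) (f : E → F) (v : E) :
    dirDeriv v (fun y => c • f y) = fun x => c • dirDeriv v f x := by
  ext x
  exact DFunLike.congr_fun (congrFun (fderiv_const_smul_field (f := f) c) x) v

lemma dirDeriv_const_mul (c : ℝ) (f : E → ℝ) (v : E) :
    dirDeriv v (fun y => c * f y) = fun x => c * dirDeriv v f x :=
  dirDeriv_const_smul c f v

lemma dirDeriv_comp_of_hasDerivAt {f : E → ℝ} {x : E} {h : ℝ → ℝ} {h' : ℝ}
    (hh : HasDerivAt h h' (f x)) (hf : DifferentiableAt ℝ f x) (v : E) :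
    dirDeriv v (fun y => h (f y)) x = h' * dirDeriv v f x := by
  have hcomp : HasFDerivAt (fun y => h (f y)) (h' • fderiv ℝ f x) x :=
    hh.comp_hasFDerivAt x hf.hasFDerivAt
  simp [dirDeriv, hcomp.fderiv]

end DirDeriv

section DelayIntegral

variable {E F : Type*} [NormedAddCommGroup E] [NormedAddCommGroup F] {g : E × ℝ → F} {K : Set E}

lemma continuous_comp_sub_delay {τ : E → ℝ} (hτ : Continuous τ) (hg : Continuous g)
    (p : E × ℝ) : Continuous fun z => g (p - (z, τ z)) := by
  fun_prop

lemma hasCompactSupport_comp_sub_delay (hK : IsCompact K) (hs : tsupport g ⊆ K ×ˢ Set.univ)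
    (τ : E → ℝ) (p : E × ℝ) : HasCompactSupport fun z => g (p - (z, τ z)) := by
  refine .intro (hK.image (f := (p.1 - ·)) (by fun_prop)) fun z hz => ?_
  exact image_eq_zero_of_notMem_tsupport fun h => hz ⟨p.1 - z, (hs h).1, sub_sub_cancel p.1 z⟩

lemma exists_norm_comp_sub_delay_le_indicator {ι : Type*} [TopologicalSpace ι] {N : Set ι}
    (hN : IsCompact N) (hK : IsCompact K) (hs : tsupport g ⊆ K ×ˢ Set.univ) (hg : Continuous g)
    {q : ι → E × ℝ} (hq : Continuous q) {τ : ι → E → ℝ} (hτ : Continuous ↿τ) :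
    ∃ A, IsCompact A ∧ ∃ M, 0 ≤ M ∧
      ∀ i ∈ N, ∀ z, ‖g (q i - (z, τ i z))‖ ≤ A.indicator (fun _ => M) z := by
  have hA : IsCompact ((fun x : ι × E => (q x.1).1 - x.2) '' N ×ˢ K) :=
    (hN.prod hK).image (by fun_prop)
  have hcont : Continuous fun x : ι × E => g (q x.1 - (x.2, τ x.1 x.2)) :=
    hg.comp ((hq.comp continuous_fst).sub (continuous_snd.prodMk hτ))
  obtain ⟨M, hM⟩ := (hN.prod hA).exists_bound_of_continuousOn hcont.continuousOn
  refine ⟨_, hA, max M 0, le_max_right _ _, fun i hi z => ?_⟩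
  refine Set.le_indicator_apply
    (fun hz => (hM (i, z) ⟨hi, hz⟩).trans (le_max_left _ _)) fun hz => ?_
  have hgz : g (q i - (z, τ i z)) = 0 := image_eq_zero_of_notMem_tsupport fun h =>
    hz ⟨(i, (q i).1 - z), ⟨hi, (hs h).1⟩, sub_sub_cancel _ z⟩
  rw [hgz, norm_zero]

variable [MeasurableSpace E] {μ : Measure E} {k : E → ℝ}

lemma integrable_mul_indicator [OpensMeasurableSpace E] (hk : LocallyIntegrable k μ) {A : Set E}
    (hA : IsCompact A) (M : ℝ) : Integrable (fun z => k z * A.indicator (fun _ => M) z) μ := by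
  simp only [← Set.indicator_mul_right]
  exact IntegrableOn.integrable_indicator ((hk.integrableOn_isCompact hA).mul_const M)
    hA.measurableSet

variable [NormedSpace ℝ F]

/-- The superposition of translates of the space-time field `g` in which the contribution from
displacement `z` is weighted by `k z` and delayed by `τ z`. -/
def delayIntegral (μ : Measure E) (k τ : E → ℝ) (g : E × ℝ → F) (p : E × ℝ) : F :=
  ∫ z, k z • g (p - (z, τ z)) ∂μ

variable {τ : E → ℝ}

lemma delayIntegral_const_smul_kernel (c : ℝ) (p : E × ℝ) :
    delayIntegral μ (fun z => c * k z) τ g p = c • delayIntegral μ k τ g p := by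
  simp only [delayIntegral, mul_smul, integral_smul]

variable [BorelSpace E]

lemma integrable_delay (hk : LocallyIntegrable k μ) (hτ : Continuous τ) (hK : IsCompact K)
    (hs : tsupport g ⊆ K ×ˢ Set.univ) (hg : Continuous g) (p : E × ℝ) :
    Integrable (fun z => k z • g (p - (z, τ z))) μ :=
  hk.integrable_smul_right_of_hasCompactSupport (continuous_comp_sub_delay hτ hg p)
    (hasCompactSupport_comp_sub_delay hK hs τ p)

lemma delayIntegral_add_kernel {k₁ k₂ : E → ℝ} (hk₁ : LocallyIntegrable k₁ μ)
    (hk₂ : LocallyIntegrable k₂ μ) (hτ : Continuous τ) (hK : IsCompact K)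
    (hs : tsupport g ⊆ K ×ˢ Set.univ) (hg : Continuous g) (p : E × ℝ) :
    delayIntegral μ (fun z => k₁ z + k₂ z) τ g p =
      delayIntegral μ k₁ τ g p + delayIntegral μ k₂ τ g p := by
  simp only [delayIntegral, add_smul]
  exact integral_add (integrable_delay hk₁ hτ hK hs hg p) (integrable_delay hk₂ hτ hK hs hg p)

lemma delayIntegral_sum_kernel {ι : Type*} (s : Finset ι) {k : ι → E → ℝ}
    (hk : ∀ i ∈ s, LocallyIntegrable (k i) μ) (hτ : Continuous τ) (hK : IsCompact K)
    (hs : tsupport g ⊆ K ×ˢ Set.univ) (hg : Continuous g) (p : E × ℝ) :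
    delayIntegral μ (fun z => ∑ i ∈ s, k i z) τ g p = ∑ i ∈ s, delayIntegral μ (k i) τ g p := by
  simp only [delayIntegral, Finset.sum_smul]
  exact integral_finsetSum _ fun i hi => integrable_delay (hk i hi) hτ hK hs hg p

lemma continuous_delayIntegral [ProperSpace E] (hk : LocallyIntegrable k μ) (hτ : Continuous τ)
    (hK : IsCompact K) (hs : tsupport g ⊆ K ×ˢ Set.univ) (hg : Continuous g) :
    Continuous (delayIntegral μ k τ g) := by
  refine continuous_iff_continuousAt.2 fun p => ?_
  obtain ⟨A, hA, M, -, hM⟩ := exists_norm_comp_sub_delay_le_indicator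
    (isCompact_closedBall p 1) hK hs hg continuous_id (τ := fun _ => τ) (hτ.comp continuous_snd)
  have hk' : LocallyIntegrable (fun z => ‖k z‖) μ := fun x => (hk x).norm
  refine continuousAt_of_dominated (bound := fun z => ‖k z‖ * A.indicator (fun _ => M) z)
    (.of_forall fun q => (integrable_delay hk hτ hK hs hg q).aestronglyMeasurable)
    ?_ (integrable_mul_indicator hk' hA M) (.of_forall fun z => by fun_prop)
  filter_upwards [Metric.closedBall_mem_nhds p one_pos] with q hq
  refine .of_forall fun z => ?_
  rw [norm_smul]
  gcongr
  exact hM q hq z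

lemma tendsto_delayIntegral {D : Type*} [TopologicalSpace D] [WeaklyLocallyCompactSpace D]
    {δ₀ : D} {l : Filter D} [l.IsCountablyGenerated] (hl : l ≤ 𝓝 δ₀) {κ : D → E → ℝ}
    {b : E → ℝ} (hb : LocallyIntegrable b μ) (hκ : ∀ᶠ δ in l, AEStronglyMeasurable (κ δ) μ)
    (hκb : ∀ᶠ δ in l, ∀ᵐ z ∂μ, ‖κ δ z‖ ≤ b z)
    (hκk : ∀ᵐ z ∂μ, Tendsto (κ · z) l (𝓝 (k z))) {τ : D → E → ℝ} (hτ : Continuous ↿τ)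
    (hK : IsCompact K) (hs : tsupport g ⊆ K ×ˢ Set.univ) (hg : Continuous g) (p : E × ℝ) :
    Tendsto (fun δ => delayIntegral μ (κ δ) (τ δ) g p) l (𝓝 (delayIntegral μ k (τ δ₀) g p)) := by
  obtain ⟨N, hN, hNδ⟩ := exists_compact_mem_nhds δ₀
  obtain ⟨A, hA, M, -, hM⟩ := exists_norm_comp_sub_delay_le_indicator hN hK hs hg
    (continuous_const (y := p)) hτ
  have hgδ (δ : D) : AEStronglyMeasurable (fun z => g (p - (z, τ δ z))) μ :=
    (continuous_comp_sub_delay (hτ.comp (.prodMk_right δ)) hg p)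
      |>.stronglyMeasurable_of_hasCompactSupport
        (hasCompactSupport_comp_sub_delay hK hs (τ δ) p) |>.aestronglyMeasurable
  refine tendsto_integral_filter_of_dominated_convergence
    (fun z => b z * A.indicator (fun _ => M) z) ?_ ?_ (integrable_mul_indicator hb hA M) ?_
  · filter_upwards [hκ] with δ hδ using hδ.smul (hgδ δ)
  · filter_upwards [hκb, hl hNδ] with δ hδ hδN
    filter_upwards [hδ] with z hz
    rw [norm_smul]
    exact mul_le_mul hz (hM δ hδN z) (norm_nonneg _) ((norm_nonneg _).trans hz)
  · filter_upwards [hκk] with z hz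
    have hcont : Continuous fun δ => g (p - (z, τ δ z)) :=
      hg.comp (continuous_const.sub (continuous_const.prodMk (hτ.comp (.prodMk_left z))))
    exact hz.smul ((hcont.tendsto δ₀).mono_left hl)

variable [NormedSpace ℝ E]

lemma hasFDerivAt_delayIntegral [ProperSpace E] (hk : LocallyIntegrable k μ) (hτ : Continuous τ)
    (hK : IsCompact K) (hs : tsupport g ⊆ K ×ˢ Set.univ) (hg : ContDiff ℝ 1 g) (p : E × ℝ) :
    HasFDerivAt (delayIntegral μ k τ g) (delayIntegral μ k τ (fderiv ℝ g) p) p := by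
  have hg' : Continuous (fderiv ℝ g) := hg.continuous_fderiv one_ne_zero
  have hs' : tsupport (fderiv ℝ g) ⊆ K ×ˢ Set.univ := (tsupport_fderiv_subset ℝ).trans hs
  obtain ⟨A, hA, M, -, hM⟩ := exists_norm_comp_sub_delay_le_indicator
    (isCompact_closedBall p 1) hK hs' hg' continuous_id (τ := fun _ => τ)
    (hτ.comp continuous_snd)
  have hk' : LocallyIntegrable (fun z => ‖k z‖) μ := fun x => (hk x).norm
  refine hasFDerivAt_integral_of_dominated_of_fderiv_le
    (F' := fun q z => k z • fderiv ℝ g (q - (z, τ z)))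
    (bound := fun z => ‖k z‖ * A.indicator (fun _ => M) z)
    (Metric.closedBall_mem_nhds p one_pos)
    (.of_forall fun q => (integrable_delay hk hτ hK hs hg.continuous q).aestronglyMeasurable)
    (integrable_delay hk hτ hK hs hg.continuous p)
    (integrable_delay hk hτ hK hs' hg' p).aestronglyMeasurable
    (.of_forall fun z q hq => ?_) (integrable_mul_indicator hk' hA M)
    (.of_forall fun z q _ => ?_)
  · rw [norm_smul]
    gcongr
    exact hM q hq z
  · have hgz := (hg.differentiable one_ne_zero (q - (z, τ z))).hasFDerivAt
    exact (hgz.comp q ((hasFDerivAt_id q).sub_const _)).const_smul (k z)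

lemma dirDeriv_delayIntegral [ProperSpace E] (hk : LocallyIntegrable k μ) (hτ : Continuous τ)
    (hK : IsCompact K) (hs : tsupport g ⊆ K ×ˢ Set.univ) (hg : ContDiff ℝ 1 g) (v : E × ℝ) :
    dirDeriv v (delayIntegral μ k τ g) = delayIntegral μ k τ (dirDeriv v g) := by
  have hs' : tsupport (fderiv ℝ g) ⊆ K ×ˢ Set.univ := (tsupport_fderiv_subset ℝ).trans hs
  ext p
  have hint := integrable_delay hk hτ hK hs' (hg.continuous_fderiv one_ne_zero) p
  rw [dirDeriv, (hasFDerivAt_delayIntegral hk hτ hK hs hg p).fderiv]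
  exact ContinuousLinearMap.integral_apply hint v

lemma contDiff_nat_delayIntegral [FiniteDimensional ℝ E] (hk : LocallyIntegrable k μ)
    (hτ : Continuous τ) (hK : IsCompact K) (hs : tsupport g ⊆ K ×ˢ Set.univ) (n : ℕ)
    (hg : ContDiff ℝ n g) : ContDiff ℝ n (delayIntegral μ k τ g) := by
  induction n generalizing g with
  | zero => exact contDiff_zero.2 (continuous_delayIntegral hk hτ hK hs (contDiff_zero.1 hg))
  | succ n ih =>
    have hg₁ : ContDiff ℝ 1 g := hg.of_le (by simp)
    refine (contDiff_succ_iff_fderiv_apply (n := n)).2 ⟨?_, by simp, fun v => ?_⟩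
    · exact fun p => (hasFDerivAt_delayIntegral hk hτ hK hs hg₁ p).differentiableAt
    · change ContDiff ℝ n (dirDeriv v (delayIntegral μ k τ g))
      rw [dirDeriv_delayIntegral hk hτ hK hs hg₁]
      exact ih ((tsupport_dirDeriv_subset v).trans hs) (contDiff_dirDeriv hg le_rfl v)

lemma contDiff_delayIntegral [FiniteDimensional ℝ E] (hk : LocallyIntegrable k μ)
    (hτ : Continuous τ) (hK : IsCompact K) (hs : tsupport g ⊆ K ×ˢ Set.univ) {n : ℕ∞}
    (hg : ContDiff ℝ n g) : ContDiff ℝ n (delayIntegral μ k τ g) :=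
  contDiff_iff_forall_nat_le.2 fun m hm =>
    contDiff_nat_delayIntegral hk hτ hK hs m (hg.of_le (mod_cast hm))

end DelayIntegral

section DelayIntegralByParts

variable {E F : Type*} [NormedAddCommGroup E] [NormedSpace ℝ E] [NormedAddCommGroup F]
  [NormedSpace ℝ F] {k τ : E → ℝ} {g : E × ℝ → F} {K : Set E}

lemma dirDeriv_comp_sub_delay (hτ : Differentiable ℝ τ) (hg : Differentiable ℝ g)
    (p : E × ℝ) (v z : E) :
    dirDeriv v (fun z => g (p - (z, τ z))) z =
      -(dirDeriv (v, 0) g (p - (z, τ z)) +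
        dirDeriv v τ z • dirDeriv (0, 1) g (p - (z, τ z))) := by
  have hd : HasFDerivAt (fun z => p - (z, τ z)) (-((ContinuousLinearMap.id ℝ E).prod
      (fderiv ℝ τ z))) z :=
    ((hasFDerivAt_id z).prodMk (hτ z).hasFDerivAt).const_sub p
  have hv : (v, fderiv ℝ τ z v) = (v, 0) + fderiv ℝ τ z v • ((0 : E), (1 : ℝ)) := by simp
  have hgd : HasFDerivAt (fun z => g (p - (z, τ z))) _ z := (hg _).hasFDerivAt.comp z hd
  rw [dirDeriv, hgd.fderiv]
  simp only [dirDeriv, ContinuousLinearMap.comp_apply, neg_apply,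
    ContinuousLinearMap.prod_apply, ContinuousLinearMap.id_apply, map_neg]
  rw [hv, map_add, map_smul]

variable [FiniteDimensional ℝ E] [MeasurableSpace E] [BorelSpace E] {μ : Measure E}
  [μ.IsAddHaarMeasure]

lemma delayIntegral_dirDeriv_space (hk : ContDiff ℝ 1 k) (hτ : ContDiff ℝ 1 τ)
    (hK : IsCompact K) (hs : tsupport g ⊆ K ×ˢ Set.univ) (hg : ContDiff ℝ 1 g) (v : E)
    (p : E × ℝ) :
    delayIntegral μ k τ (dirDeriv (v, 0) g) p =
      delayIntegral μ (dirDeriv v k) τ g p -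
        delayIntegral μ (fun z => k z * dirDeriv v τ z) τ (dirDeriv (0, 1) g) p := by
  have hk' : Continuous (dirDeriv v k) := (contDiff_dirDeriv (m := 0) hk (by simp) v).continuous
  have hτ' : Continuous (dirDeriv v τ) := (contDiff_dirDeriv (m := 0) hτ (by simp) v).continuous
  have hint {κ : E → ℝ} (hκ : Continuous κ) {f : E × ℝ → F}
      (hf : tsupport f ⊆ K ×ˢ Set.univ) (hfc : Continuous f) :
      Integrable (fun z => κ z • f (p - (z, τ z))) μ :=
    integrable_delay hκ.locallyIntegrable hτ.continuous hK hf hfc p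
  have hint' {κ : E → ℝ} (hκ : Continuous κ) (w : E × ℝ) :
      Integrable (fun z => κ z • dirDeriv w g (p - (z, τ z))) μ :=
    hint hκ ((tsupport_dirDeriv_subset w).trans hs)
      (contDiff_dirDeriv (m := 0) hg (by simp) w).continuous
  have hspace := hint' hk.continuous (v, 0)
  have htime := hint' (κ := fun z => k z * dirDeriv v τ z) (hk.continuous.mul hτ') (0, 1)
  have hg₁ := hg.differentiable one_ne_zero
  have hτ₁ := hτ.differentiable one_ne_zero
  have hchain (z : E) : k z • dirDeriv v (fun z => g (p - (z, τ z))) z =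
      -(k z • dirDeriv (v, 0) g (p - (z, τ z)) +
        (k z * dirDeriv v τ z) • dirDeriv (0, 1) g (p - (z, τ z))) := by
    rw [dirDeriv_comp_sub_delay hτ₁ hg₁, smul_neg, smul_add, mul_smul]
  have hparts : ∫ z, k z • dirDeriv v (fun z => g (p - (z, τ z))) z ∂μ =
      -∫ z, dirDeriv v k z • g (p - (z, τ z)) ∂μ :=
    integral_smul_fderiv_eq_neg_fderiv_smul_of_integrable (hint hk' hs hg.continuous)
      ((hspace.add htime).neg.congr (.of_forall fun z => (hchain z).symm))
      (hint hk.continuous hs hg.continuous) (fun z _ => hk.differentiable one_ne_zero z)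
      fun z _ => by fun_prop
  simp only [hchain] at hparts
  rw [integral_neg, neg_inj, integral_add hspace htime] at hparts
  exact eq_sub_of_add_eq hparts

lemma delayIntegral_dirDeriv_dirDeriv_space (hk : ContDiff ℝ 2 k) (hτ : ContDiff ℝ 2 τ)
    (hK : IsCompact K) (hs : tsupport g ⊆ K ×ˢ Set.univ) (hg : ContDiff ℝ 2 g) (v : E)
    (p : E × ℝ) :
    delayIntegral μ k τ (dirDeriv (v, 0) (dirDeriv (v, 0) g)) p =
      delayIntegral μ (dirDeriv v (dirDeriv v k)) τ g p -
        delayIntegral μ (fun z => dirDeriv v k z * dirDeriv v τ z +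
          dirDeriv v (fun z => k z * dirDeriv v τ z) z) τ (dirDeriv (0, 1) g) p +
        delayIntegral μ (fun z => k z * dirDeriv v τ z ^ 2) τ
          (dirDeriv (0, 1) (dirDeriv (0, 1) g)) p := by
  have hone_two : (1 : WithTop ℕ∞) + 1 ≤ 2 := one_add_one_eq_two.le
  have hk' : ContDiff ℝ 1 (dirDeriv v k) := contDiff_dirDeriv hk hone_two v
  have hτ' : ContDiff ℝ 1 (dirDeriv v τ) := contDiff_dirDeriv hτ hone_two v
  have hg' (w : E × ℝ) : ContDiff ℝ 1 (dirDeriv w g) := contDiff_dirDeriv hg hone_two w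
  have hs' (w : E × ℝ) : tsupport (dirDeriv w g) ⊆ K ×ˢ Set.univ :=
    (tsupport_dirDeriv_subset w).trans hs
  have hk₁ := hk.of_le one_le_two
  have hτ₁ := hτ.of_le one_le_two
  have hkτ : ContDiff ℝ 1 fun z => k z * dirDeriv v τ z := hk₁.mul hτ'
  have hkτ' : Continuous (dirDeriv v fun z => k z * dirDeriv v τ z) :=
    (contDiff_dirDeriv (m := 0) hkτ (by simp) v).continuous
  rw [delayIntegral_dirDeriv_space hk₁ hτ₁ hK (hs' _) (hg' _),
    delayIntegral_dirDeriv_space hk' hτ₁ hK hs (hg.of_le one_le_two),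
    dirDeriv_comm hg, delayIntegral_dirDeriv_space hkτ hτ₁ hK (hs' _) (hg' _)]
  rw [delayIntegral_add_kernel (hk'.mul hτ').continuous.locallyIntegrable
    hkτ'.locallyIntegrable hτ.continuous hK (hs' _) (hg' _).continuous]
  simp only [sq, mul_assoc]
  abel

end DelayIntegralByParts

lemma tendsto_integral_dilation_smul {E F : Type*} [NormedAddCommGroup E] [NormedSpace ℝ E]
    [FiniteDimensional ℝ E] [MeasurableSpace E] [BorelSpace E] {μ : Measure E}
    [μ.IsAddHaarMeasure] [NormedAddCommGroup F] [NormedSpace ℝ F] [CompleteSpace F] {φ : E → ℝ}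
    (hφ : Integrable φ μ) {G : ℝ → E → F} (hG : Continuous ↿G) {M : ℝ}
    (hM : ∀ᶠ δ in 𝓝[>] 0, ∀ z, ‖G δ z‖ ≤ M) :
    Tendsto (fun δ => ∫ z, ((δ ^ finrank ℝ E)⁻¹ * φ (δ⁻¹ • z)) • G δ z ∂μ) (𝓝[>] 0)
      (𝓝 ((∫ z, φ z ∂μ) • G 0 0)) := by
  have hlim : Tendsto (fun δ => ∫ w, φ w • G δ (δ • w) ∂μ) (𝓝[>] 0)
      (𝓝 (∫ w, φ w • G 0 0 ∂μ)) := by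
    refine tendsto_integral_filter_of_dominated_convergence (fun w => ‖φ w‖ * M)
      (.of_forall fun δ => ?_) ?_ (hφ.norm.mul_const M) (.of_forall fun w => ?_)
    · exact hφ.aestronglyMeasurable.smul
        (hG.comp (by fun_prop : Continuous fun w => (δ, δ • w))).aestronglyMeasurable
    · filter_upwards [hM] with δ hδ
      refine .of_forall fun w => ?_
      rw [norm_smul]
      gcongr
      exact hδ _
    · have hcont : Continuous fun δ : ℝ => G δ (δ • w) :=
        hG.comp (by fun_prop : Continuous fun δ : ℝ => (δ, δ • w))
      have hG₀ := (hcont.tendsto 0).mono_left (nhdsWithin_le_nhds (s := Set.Ioi 0))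
      rw [zero_smul] at hG₀
      exact hG₀.const_smul (φ w)
  rw [integral_smul_const] at hlim
  refine hlim.congr' ?_
  filter_upwards [self_mem_nhdsWithin] with δ (hδ : 0 < δ)
  have hscale := μ.integral_comp_inv_smul_of_nonneg (fun w => φ w • G δ (δ • w)) hδ.le
  simp only [smul_inv_smul₀ hδ.ne'] at hscale
  simp only [mul_smul, integral_smul, hscale]
  rw [inv_smul_smul₀ (pow_pos hδ _).ne']

section SoftNorm

/-- The Euclidean norm on `V3`, softened at scale `δ`: smooth for `δ ≠ 0`, and `norm3` for
`δ = 0`. -/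
def softNorm3 (δ : ℝ) (z : V3) : ℝ := √(dot3 z z + δ ^ 2)

lemma softNorm3_zero : softNorm3 0 = norm3 := by
  ext z
  simp [softNorm3, norm3]

lemma dot3_self_nonneg (z : V3) : 0 ≤ dot3 z z := Finset.sum_nonneg fun i _ => mul_self_nonneg (z i)

lemma softNorm3_sq (δ : ℝ) (z : V3) : softNorm3 δ z ^ 2 = dot3 z z + δ ^ 2 :=
  sq_sqrt (by have := dot3_self_nonneg z; positivity)

lemma softNorm3_pos {δ : ℝ} (hδ : δ ≠ 0) (z : V3) : 0 < softNorm3 δ z :=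
  sqrt_pos.2 (by have := dot3_self_nonneg z; positivity)

lemma norm_le_softNorm3 (δ : ℝ) (z : V3) : ‖z‖ ≤ softNorm3 δ z := by
  refine (pi_norm_le_iff_of_nonneg (sqrt_nonneg _)).2 fun i => abs_le_sqrt ?_
  have hi : z i * z i ≤ dot3 z z :=
    Finset.single_le_sum (f := fun j => z j * z j) (fun j _ => mul_self_nonneg (z j))
      (Finset.mem_univ i)
  nlinarith [sq_nonneg δ]

lemma continuous_softNorm3 : Continuous ↿softNorm3 := by
  simp only [Function.HasUncurry.uncurry, id_eq, softNorm3, dot3]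
  fun_prop

lemma softNorm3_eq_mul_softNorm3_one {δ : ℝ} (hδ : 0 < δ) (z : V3) :
    softNorm3 δ z = δ * softNorm3 1 (δ⁻¹ • z) := by
  have hdot : dot3 (δ⁻¹ • z) (δ⁻¹ • z) = δ⁻¹ ^ 2 * dot3 z z := by
    simp only [dot3, Pi.smul_apply, smul_eq_mul, Finset.mul_sum]
    exact Finset.sum_congr rfl fun i _ => by ring
  rw [softNorm3, softNorm3, hdot, ← sqrt_sq hδ.le, ← sqrt_mul (sq_nonneg _), sqrt_sq hδ.le]
  congr 1
  field_simp

lemma contDiff_softNorm3 {δ : ℝ} (hδ : δ ≠ 0) {n : WithTop ℕ∞} : ContDiff ℝ n (softNorm3 δ) := by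
  refine ContDiff.sqrt ?_ fun z => ?_
  · unfold dot3
    fun_prop
  · have := dot3_self_nonneg z
    positivity

variable {δ : ℝ}

lemma dirDeriv_dot3_self (i : Fin 3) (z : V3) :
    dirDeriv (Pi.single i 1) (fun z => dot3 z z) z = 2 * z i := by
  have hcoord (j : Fin 3) : HasFDerivAt (fun z : V3 => z j)
      (ContinuousLinearMap.proj (R := ℝ) (φ := fun _ => ℝ) j) z :=
    hasFDerivAt_apply j z
  have hd : HasFDerivAt (fun z : V3 => ∑ j, z j * z j) _ z :=
    .fun_sum fun j _ => (hcoord j).mul (hcoord j)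
  simp only [dirDeriv, dot3, hd.fderiv]
  simp [Pi.single_apply, two_mul, Finset.sum_add_distrib]

lemma dirDeriv_softNorm3 (hδ : δ ≠ 0) (i : Fin 3) (z : V3) :
    dirDeriv (Pi.single i 1) (softNorm3 δ) z = z i / softNorm3 δ z := by
  have hsqrt : HasDerivAt (fun u => √(u + δ ^ 2)) (1 / (2 * softNorm3 δ z)) (dot3 z z) :=
    ((hasDerivAt_id _).add_const _).sqrt (sqrt_pos.1 (softNorm3_pos hδ z)).ne'
  have hdot : DifferentiableAt ℝ (fun z => dot3 z z) z := by
    unfold dot3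
    fun_prop
  have hpos := softNorm3_pos hδ z
  unfold softNorm3 at *
  rw [dirDeriv_comp_of_hasDerivAt (f := fun z => dot3 z z) hsqrt hdot, dirDeriv_dot3_self]
  field_simp

lemma dirDeriv_softNorm3_pow_inv (hδ : δ ≠ 0) (n : ℕ) (i : Fin 3) (z : V3) :
    dirDeriv (Pi.single i 1) (fun z => (softNorm3 δ z ^ n)⁻¹) z =
      -(n * z i) / softNorm3 δ z ^ (n + 2) := by
  have hpos := softNorm3_pos hδ z
  have hpow : HasDerivAt (fun s : ℝ => (s ^ n)⁻¹) (-n / softNorm3 δ z ^ (n + 1))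
      (softNorm3 δ z) := by
    have hexp : (-n - 1 : ℤ) = -(n + 1 : ℕ) := by omega
    simpa only [hexp, zpow_neg, zpow_natCast, Int.cast_neg, Int.cast_natCast, ← div_eq_mul_inv]
      using hasDerivAt_zpow (-n) (softNorm3 δ z) (.inl hpos.ne')
  rw [dirDeriv_comp_of_hasDerivAt hpow
    ((contDiff_softNorm3 hδ (n := 1)).differentiable one_ne_zero z), dirDeriv_softNorm3 hδ]
  field_simp
  ring

lemma dirDeriv_coord_mul_softNorm3_pow_inv (hδ : δ ≠ 0) (n : ℕ) (i : Fin 3) (z : V3) :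
    dirDeriv (Pi.single i 1) (fun z => z i * (softNorm3 δ z ^ n)⁻¹) z =
      (softNorm3 δ z ^ n)⁻¹ - n * z i ^ 2 / softNorm3 δ z ^ (n + 2) := by
  have hpos := softNorm3_pos hδ z
  have hcoord : dirDeriv (Pi.single i 1) (fun z : V3 => z i) z = 1 := by
    simp [dirDeriv, (hasFDerivAt_apply i z).fderiv]
  rw [dirDeriv_mul (by fun_prop) ?_, dirDeriv_softNorm3_pow_inv hδ, hcoord]
  · ring
  · exact (((contDiff_softNorm3 hδ (n := 1)).differentiable one_ne_zero z).pow n).inv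
      (pow_pos hpos n).ne'

end SoftNorm

lemma locallyIntegrable_norm_pow_inv {E : Type*} [NormedAddCommGroup E] [NormedSpace ℝ E]
    [FiniteDimensional ℝ E] [MeasurableSpace E] [BorelSpace E] (μ : Measure E)
    [μ.IsAddHaarMeasure] {m : ℕ} (hm : m < finrank ℝ E) :
    LocallyIntegrable (fun z : E => (‖z‖ ^ m)⁻¹) μ := by
  refine locallyIntegrable_of_norm_le_rpow (C := 1) (α := m) (by omega) (mod_cast hm)
    (.of_forall fun z => ?_) (by fun_prop)
  simp [rpow_neg]

lemma hasDerivAt_cube_div_sqrt_sq_add_one_cube (y : ℝ) :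
    HasDerivAt (fun y => y ^ 3 / √(y ^ 2 + 1) ^ 3) (y ^ 2 * (3 / √(y ^ 2 + 1) ^ 5)) y := by
  have hpos : 0 < √(y ^ 2 + 1) := sqrt_pos.2 (by positivity)
  have hsq : √(y ^ 2 + 1) ^ 2 = y ^ 2 + 1 := sq_sqrt (by positivity)
  have hsqrt : HasDerivAt (fun y => √(y ^ 2 + 1)) (2 * y / (2 * √(y ^ 2 + 1))) y := by
    simpa using ((hasDerivAt_pow 2 y).add_const 1).sqrt (by positivity)
  have hquot : HasDerivAt (fun y => y ^ 3 / √(y ^ 2 + 1) ^ 3) _ y :=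
    (hasDerivAt_pow 3 y).fun_div (hsqrt.fun_pow 3) (pow_ne_zero 3 hpos.ne')
  refine hquot.congr_deriv ?_
  push_cast
  generalize √(y ^ 2 + 1) = s at *
  field_simp
  rw [hsq]
  ring

lemma tendsto_cube_div_sqrt_sq_add_one_cube_atTop :
    Tendsto (fun y : ℝ => y ^ 3 / √(y ^ 2 + 1) ^ 3) atTop (𝓝 1) := by
  have hpos (u : ℝ) : 0 < √(1 + u ^ 2) := sqrt_pos.2 (by positivity)
  have hcont : Continuous fun u : ℝ => (√(1 + u ^ 2) ^ 3)⁻¹ :=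
    Continuous.inv₀ (by fun_prop) fun u => (pow_pos (hpos u) 3).ne'
  have hlim : Tendsto (fun y : ℝ => (√(1 + y⁻¹ ^ 2) ^ 3)⁻¹) atTop (𝓝 1) := by
    simpa [Function.comp_def] using (hcont.tendsto 0).comp tendsto_inv_atTop_zero
  refine hlim.congr' ?_
  filter_upwards [eventually_gt_atTop 0] with y hy
  have hsqrt : √(y ^ 2 + 1) = y * √(1 + y⁻¹ ^ 2) := by
    rw [show y ^ 2 + 1 = y ^ 2 * (1 + y⁻¹ ^ 2) by field_simp, sqrt_mul (sq_nonneg y),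
      sqrt_sq hy.le]
  have := hpos y⁻¹
  rw [hsqrt]
  field_simp

lemma integral_Ioi_sq_mul_three_div_sqrt_sq_add_one_pow_five :
    ∫ y in Set.Ioi (0 : ℝ), y ^ 2 * (3 / √(y ^ 2 + 1) ^ 5) = 1 := by
  simpa using integral_Ioi_of_hasDerivAt_of_nonneg' (a := 0)
    (fun y _ => hasDerivAt_cube_div_sqrt_sq_add_one_cube y) (fun y _ => by positivity)
    tendsto_cube_div_sqrt_sq_add_one_cube_atTop

lemma integral_three_div_softNorm3_one_pow_five :
    ∫ w : V3, 3 / softNorm3 1 w ^ 5 = 4 * π := by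
  have hnorm (w : V3) : softNorm3 1 w = √(‖WithLp.toLp 2 w‖ ^ 2 + 1) := by
    simp [softNorm3, dot3, EuclideanSpace.real_norm_sq_eq, ← sq]
  simp only [hnorm]
  rw [(PiLp.volume_preserving_toLp (Fin 3)).integral_comp
    (MeasurableEquiv.toLp 2 V3).measurableEmbedding (fun x => 3 / √(‖x‖ ^ 2 + 1) ^ 5),
    integral_fun_norm_addHaar volume fun y => 3 / √(y ^ 2 + 1) ^ 5]
  simp only [finrank_euclideanSpace, Fintype.card_fin, smul_eq_mul, Nat.add_one_sub_one,
    integral_Ioi_sq_mul_three_div_sqrt_sq_add_one_pow_five, Measure.real,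
    EuclideanSpace.volume_ball_fin_three]
  rw [ENNReal.toReal_mul, ENNReal.toReal_ofReal (by positivity)]
  simp only [ENNReal.ofReal_one, one_pow, ENNReal.toReal_one, one_mul, mul_one, nsmul_eq_mul,
    Nat.cast_ofNat]
  ring

lemma integrable_three_div_softNorm3_one_pow_five :
    Integrable fun w : V3 => 3 / softNorm3 1 w ^ 5 :=
  .of_integral_ne_zero (by rw [integral_three_div_softNorm3_one_pow_five]; positivity)

section RegularizedPotential

variable {F : Type*} [NormedAddCommGroup F] [NormedSpace ℝ F] {g : V3 × ℝ → F} {K : Set V3}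
  {δ : ℝ}

lemma dirDeriv_softNorm3_inv (hδ : δ ≠ 0) (i : Fin 3) :
    dirDeriv (Pi.single i 1) (fun z => (softNorm3 δ z)⁻¹) =
      fun z => -1 * (z i * (softNorm3 δ z ^ 3)⁻¹) := by
  ext z
  have h := dirDeriv_softNorm3_pow_inv hδ 1 i z
  simp only [pow_one] at h
  rw [h]
  push_cast
  ring

lemma dirDeriv_dirDeriv_softNorm3_inv (hδ : δ ≠ 0) (i : Fin 3) :
    dirDeriv (Pi.single i 1) (dirDeriv (Pi.single i 1) fun z => (softNorm3 δ z)⁻¹) =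
      fun z => -1 * ((softNorm3 δ z ^ 3)⁻¹ - 3 * z i ^ 2 / softNorm3 δ z ^ 5) := by
  rw [dirDeriv_softNorm3_inv hδ, dirDeriv_const_mul]
  ext z
  rw [dirDeriv_coord_mul_softNorm3_pow_inv hδ, Nat.cast_ofNat]

lemma dirDeriv_const_mul_softNorm3 (hδ : δ ≠ 0) (c : ℝ) (i : Fin 3) :
    dirDeriv (Pi.single i 1) (fun z => c * softNorm3 δ z) =
      fun z => c * (z i / softNorm3 δ z) := by
  rw [dirDeriv_const_mul]
  ext z
  rw [dirDeriv_softNorm3 hδ]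

lemma sum_softNorm3_pow_inv_sub (hδ : δ ≠ 0) (n : ℕ) (z : V3) :
    ∑ i, ((softNorm3 δ z ^ n)⁻¹ - 3 * z i ^ 2 / softNorm3 δ z ^ (n + 2)) =
      3 * δ ^ 2 / softNorm3 δ z ^ (n + 2) := by
  have hpos := softNorm3_pos hδ z
  have hsq : ∑ i, z i ^ 2 = softNorm3 δ z ^ 2 - δ ^ 2 := by
    rw [softNorm3_sq, add_sub_cancel_right]
    exact Finset.sum_congr rfl fun i _ => sq (z i)
  rw [Finset.sum_sub_distrib, ← Finset.sum_div, ← Finset.mul_sum, hsq, Fin.sum_const,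
    nsmul_eq_mul, Nat.cast_ofNat]
  field_simp
  ring

lemma delayIntegral_softNorm3_inv_dirDeriv_dirDeriv (hδ : δ ≠ 0) (c : ℝ) (hK : IsCompact K)
    (hs : tsupport g ⊆ K ×ˢ Set.univ) (hg : ContDiff ℝ 2 g) (i : Fin 3) (p : V3 × ℝ) :
    delayIntegral volume (fun z => (softNorm3 δ z)⁻¹) (fun z => c * softNorm3 δ z)
        (dirDeriv (Pi.single i 1, 0) (dirDeriv (Pi.single i 1, 0) g)) p =
      -delayIntegral volume (fun z => (softNorm3 δ z ^ 3)⁻¹ - 3 * z i ^ 2 / softNorm3 δ z ^ 5)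
          (fun z => c * softNorm3 δ z) g p -
        c • delayIntegral volume
          (fun z => (softNorm3 δ z ^ 2)⁻¹ - 3 * z i ^ 2 / softNorm3 δ z ^ 4)
          (fun z => c * softNorm3 δ z) (dirDeriv (0, 1) g) p +
        c ^ 2 • delayIntegral volume (fun z => z i ^ 2 / softNorm3 δ z ^ 3)
          (fun z => c * softNorm3 δ z) (dirDeriv (0, 1) (dirDeriv (0, 1) g)) p := by
  have hsmooth {n : WithTop ℕ∞} : ContDiff ℝ n (softNorm3 δ) := contDiff_softNorm3 hδ
  have hinv : ContDiff ℝ 2 fun z => (softNorm3 δ z)⁻¹ :=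
    hsmooth.inv fun z => (softNorm3_pos hδ z).ne'
  have hkτ : (fun z : V3 => (softNorm3 δ z)⁻¹ * (c * (z i / softNorm3 δ z))) =
      fun z => c * (z i * (softNorm3 δ z ^ 2)⁻¹) := by
    ext z
    ring
  rw [delayIntegral_dirDeriv_dirDeriv_space hinv (contDiff_const.mul hsmooth) hK hs hg,
    dirDeriv_dirDeriv_softNorm3_inv hδ, dirDeriv_softNorm3_inv hδ,
    dirDeriv_const_mul_softNorm3 hδ, delayIntegral_const_smul_kernel, neg_one_smul]
  simp only [hkτ, dirDeriv_const_mul, dirDeriv_coord_mul_softNorm3_pow_inv hδ,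
    ← delayIntegral_const_smul_kernel]
  congr 1
  · congr 2 with z
    push_cast
    ring
  · congr 1 with z
    ring

lemma sum_delayIntegral_softNorm3_inv_dirDeriv_dirDeriv (hδ : δ ≠ 0) (c : ℝ)
    (hK : IsCompact K) (hs : tsupport g ⊆ K ×ˢ Set.univ) (hg : ContDiff ℝ 2 g) (p : V3 × ℝ) :
    ∑ i, delayIntegral volume (fun z => (softNorm3 δ z)⁻¹) (fun z => c * softNorm3 δ z)
        (dirDeriv (Pi.single i 1, 0) (dirDeriv (Pi.single i 1, 0) g)) p =
      -delayIntegral volume (fun z => 3 * δ ^ 2 / softNorm3 δ z ^ 5)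
          (fun z => c * softNorm3 δ z) g p -
        c • delayIntegral volume (fun z => 3 * δ ^ 2 / softNorm3 δ z ^ 4)
          (fun z => c * softNorm3 δ z) (dirDeriv (0, 1) g) p +
        c ^ 2 • delayIntegral volume (fun z => dot3 z z / softNorm3 δ z ^ 3)
          (fun z => c * softNorm3 δ z) (dirDeriv (0, 1) (dirDeriv (0, 1) g)) p := by
  have hcont : Continuous (softNorm3 δ) := (contDiff_softNorm3 hδ (n := 0)).continuous
  have hne (n : ℕ) (z : V3) : softNorm3 δ z ^ n ≠ 0 := (pow_pos (softNorm3_pos hδ z) n).ne'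
  have hgt : ContDiff ℝ 1 (dirDeriv (0, 1) g) := contDiff_dirDeriv hg one_add_one_eq_two.le _
  have hgtt : ContDiff ℝ 0 (dirDeriv (0, 1) (dirDeriv (0, 1) g)) :=
    contDiff_dirDeriv hgt (by simp) _
  have hst := (tsupport_dirDeriv_subset (0, 1)).trans hs
  have hstt := (tsupport_dirDeriv_subset (0, 1)).trans hst
  have hdelay : Continuous fun z => c * softNorm3 δ z := hcont.const_mul c
  have hdot (z : V3) : dot3 z z = ∑ i, z i ^ 2 := Finset.sum_congr rfl fun i _ => (sq _).symm
  simp only [delayIntegral_softNorm3_inv_dirDeriv_dirDeriv hδ c hK hs hg,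
    Finset.sum_add_distrib, Finset.sum_sub_distrib, Finset.sum_neg_distrib, ← Finset.smul_sum]
  rw [← delayIntegral_sum_kernel _ ?_ hdelay hK hs hg.continuous,
    ← delayIntegral_sum_kernel _ ?_ hdelay hK hst hgt.continuous,
    ← delayIntegral_sum_kernel _ ?_ hdelay hK hstt hgtt.continuous]
  · simp only [sum_softNorm3_pow_inv_sub hδ 3, sum_softNorm3_pow_inv_sub hδ 2, hdot,
      Finset.sum_div]
  all_goals
    refine fun i _ => Continuous.locallyIntegrable ?_
    fun_prop (disch := first | exact hne _ | exact hne _ _)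

end RegularizedPotential

section SingularLimit

variable {F : Type*} [NormedAddCommGroup F] [NormedSpace ℝ F] {g : V3 × ℝ → F} {K : Set V3}

lemma continuous_const_mul_softNorm3 (c : ℝ) : Continuous ↿fun δ z => c * softNorm3 δ z :=
  continuous_softNorm3.const_mul c

lemma measurable_softNorm3 (δ : ℝ) : Measurable (softNorm3 δ) :=
  (continuous_softNorm3.comp (.prodMk_right δ)).measurable

lemma norm3_pos {z : V3} (hz : z ≠ 0) : 0 < norm3 z := by
  rw [← softNorm3_zero]
  exact (norm_pos_iff.2 hz).trans_le (norm_le_softNorm3 0 z)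

lemma tendsto_softNorm3 (z : V3) : Tendsto (softNorm3 · z) (𝓝[>] 0) (𝓝 (norm3 z)) := by
  have hcont : Continuous (softNorm3 · z) := continuous_softNorm3.comp (.prodMk_left z)
  rw [← softNorm3_zero]
  exact (hcont.tendsto 0).mono_left nhdsWithin_le_nhds

lemma tendsto_delayIntegral_softNorm3 {m : ℕ} (hm : m < 3) {κ : ℝ → V3 → ℝ} {k : V3 → ℝ} {M : ℝ}
    (hκ : ∀ δ, Measurable (κ δ)) (hκb : ∀ δ > 0, ∀ z ≠ 0, ‖κ δ z‖ ≤ M * (‖z‖ ^ m)⁻¹)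
    (hκk : ∀ z ≠ 0, Tendsto (κ · z) (𝓝[>] 0) (𝓝 (k z))) (c : ℝ) (hK : IsCompact K)
    (hs : tsupport g ⊆ K ×ˢ Set.univ) (hg : Continuous g) (p : V3 × ℝ) :
    Tendsto (fun δ => delayIntegral volume (κ δ) (fun z => c * softNorm3 δ z) g p) (𝓝[>] 0)
      (𝓝 (delayIntegral volume k (fun z => c * norm3 z) g p)) := by
  have hb : LocallyIntegrable fun z : V3 => M * (‖z‖ ^ m)⁻¹ :=
    (locallyIntegrable_norm_pow_inv volume (by simpa using hm)).smul M
  have hne : ∀ᵐ z : V3, z ≠ 0 := volume.ae_ne 0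
  rw [← softNorm3_zero]
  refine tendsto_delayIntegral nhdsWithin_le_nhds hb
    (.of_forall fun δ => (hκ δ).aestronglyMeasurable) ?_ ?_ (continuous_const_mul_softNorm3 c)
    hK hs hg p
  · filter_upwards [self_mem_nhdsWithin] with δ hδ
    filter_upwards [hne] with z hz using hκb δ hδ z hz
  · filter_upwards [hne] with z hz using hκk z hz

lemma tendsto_delayIntegral_softNorm3_inv (c : ℝ) (hK : IsCompact K)
    (hs : tsupport g ⊆ K ×ˢ Set.univ) (hg : Continuous g) (p : V3 × ℝ) :
    Tendsto (fun δ => delayIntegral volume (fun z => (softNorm3 δ z)⁻¹)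
        (fun z => c * softNorm3 δ z) g p) (𝓝[>] 0)
      (𝓝 (delayIntegral volume (fun z => (norm3 z)⁻¹) (fun z => c * norm3 z) g p)) := by
  refine tendsto_delayIntegral_softNorm3 (m := 1) (M := 1) (by simp)
    (fun δ => (measurable_softNorm3 δ).fun_inv) (fun δ hδ z hz => ?_)
    (fun z hz => (tendsto_softNorm3 z).inv₀ (norm3_pos hz).ne') c hK hs hg p
  have := norm_pos_iff.2 hz
  rw [norm_of_nonneg (inv_nonneg.2 (softNorm3_pos hδ.ne' z).le), one_mul, pow_one]
  gcongr
  exact norm_le_softNorm3 δ z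

lemma tendsto_delayIntegral_dot3_div_softNorm3_pow_three (c : ℝ) (hK : IsCompact K)
    (hs : tsupport g ⊆ K ×ˢ Set.univ) (hg : Continuous g) (p : V3 × ℝ) :
    Tendsto (fun δ => delayIntegral volume (fun z => dot3 z z / softNorm3 δ z ^ 3)
        (fun z => c * softNorm3 δ z) g p) (𝓝[>] 0)
      (𝓝 (delayIntegral volume (fun z => (norm3 z)⁻¹) (fun z => c * norm3 z) g p)) := by
  have hdot : Measurable fun z : V3 => dot3 z z := by
    unfold dot3
    fun_prop
  refine tendsto_delayIntegral_softNorm3 (m := 1) (M := 1) (by simp)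
    (fun δ => hdot.fun_div ((measurable_softNorm3 δ).pow_const 3)) (fun δ hδ z hz => ?_)
    (fun z hz => ?_) c hK hs hg p
  · have := norm_pos_iff.2 hz
    have hs := softNorm3_pos hδ.ne' z
    have hdot := dot3_self_nonneg z
    rw [norm_of_nonneg (by positivity), one_mul, pow_one]
    calc dot3 z z / softNorm3 δ z ^ 3 ≤ softNorm3 δ z ^ 2 / softNorm3 δ z ^ 3 := by
          gcongr
          rw [softNorm3_sq]
          exact le_add_of_nonneg_right (sq_nonneg δ)
      _ = (softNorm3 δ z)⁻¹ := by field_simp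
      _ ≤ ‖z‖⁻¹ := by
          gcongr
          exact norm_le_softNorm3 δ z
  · have hpos := norm3_pos hz
    have hlim : dot3 z z / norm3 z ^ 3 = (norm3 z)⁻¹ := by
      have hsq := softNorm3_sq 0 z
      rw [softNorm3_zero, zero_pow two_ne_zero, add_zero] at hsq
      rw [← hsq]
      field_simp
    rw [← hlim]
    exact tendsto_const_nhds.div ((tendsto_softNorm3 z).pow 3) (pow_pos hpos 3).ne'

lemma tendsto_delayIntegral_sq_div_softNorm3_pow_four (c : ℝ) (hK : IsCompact K)
    (hs : tsupport g ⊆ K ×ˢ Set.univ) (hg : Continuous g) (p : V3 × ℝ) :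
    Tendsto (fun δ => delayIntegral volume (fun z => 3 * δ ^ 2 / softNorm3 δ z ^ 4)
        (fun z => c * softNorm3 δ z) g p) (𝓝[>] 0) (𝓝 0) := by
  have hzero : delayIntegral volume (fun _ => 0) (fun z => c * norm3 z) g p = 0 := by
    simp [delayIntegral]
  rw [← hzero]
  refine tendsto_delayIntegral_softNorm3 (m := 2) (M := 3) (by simp)
    (fun δ => ((measurable_softNorm3 δ).pow_const 4).const_div _) (fun δ hδ z hz => ?_)
    (fun z hz => ?_) c hK hs hg p
  · have := norm_pos_iff.2 hz
    have hs := softNorm3_pos hδ.ne' z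
    rw [norm_of_nonneg (by positivity)]
    calc 3 * δ ^ 2 / softNorm3 δ z ^ 4 ≤ 3 * softNorm3 δ z ^ 2 / softNorm3 δ z ^ 4 := by
          gcongr 3 * ?_ / _
          rw [softNorm3_sq]
          exact le_add_of_nonneg_left (dot3_self_nonneg z)
      _ = 3 * (softNorm3 δ z ^ 2)⁻¹ := by field_simp
      _ ≤ 3 * (‖z‖ ^ 2)⁻¹ := by
          gcongr
          exact norm_le_softNorm3 δ z
  · have hnum : Tendsto (fun δ : ℝ => 3 * δ ^ 2) (𝓝[>] 0) (𝓝 0) := by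
      simpa using ((by fun_prop : Continuous fun δ : ℝ => 3 * δ ^ 2).tendsto 0).mono_left
        nhdsWithin_le_nhds
    have hlim := hnum.div ((tendsto_softNorm3 z).pow 4) (pow_pos (norm3_pos hz) 4).ne'
    rw [zero_div] at hlim
    exact hlim

lemma tendsto_delayIntegral_sq_div_softNorm3_pow_five [CompleteSpace F] (c : ℝ)
    (hK : IsCompact K) (hs : tsupport g ⊆ K ×ˢ Set.univ) (hg : Continuous g) (p : V3 × ℝ) :
    Tendsto (fun δ => delayIntegral volume (fun z => 3 * δ ^ 2 / softNorm3 δ z ^ 5)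
        (fun z => c * softNorm3 δ z) g p) (𝓝[>] 0) (𝓝 ((4 * π) • g p)) := by
  obtain ⟨A, -, M, hM₀, hM⟩ := exists_norm_comp_sub_delay_le_indicator
    (isCompact_Icc (a := (0 : ℝ)) (b := 1)) hK hs hg (continuous_const (y := p))
    (continuous_const_mul_softNorm3 c)
  have hcont : Continuous ↿fun δ z => g (p - (z, c * softNorm3 δ z)) :=
    hg.comp (continuous_const.sub (continuous_snd.prodMk (continuous_const_mul_softNorm3 c)))
  have hbound : ∀ᶠ δ in 𝓝[>] 0, ∀ z, ‖g (p - (z, c * softNorm3 δ z))‖ ≤ M := by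
    filter_upwards [Icc_mem_nhdsGT zero_lt_one] with δ hδ z
    exact (hM δ hδ z).trans (Set.indicator_le_self' (fun _ _ => hM₀) z)
  have hlim := tendsto_integral_dilation_smul integrable_three_div_softNorm3_one_pow_five
    hcont hbound
  rw [integral_three_div_softNorm3_one_pow_five] at hlim
  have horigin : p - ((0 : V3), c * softNorm3 0 0) = p := by simp [softNorm3, dot3]
  rw [horigin] at hlim
  refine hlim.congr' ?_
  filter_upwards [self_mem_nhdsWithin] with δ (hδ : 0 < δ)
  refine integral_congr_ae (.of_forall fun z => ?_)
  have := softNorm3_pos one_ne_zero (δ⁻¹ • z)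
  simp only [softNorm3_eq_mul_softNorm3_one hδ z, finrank_fin_fun]
  congr 1
  field_simp

theorem sum_delayIntegral_norm3_inv_dirDeriv_dirDeriv [CompleteSpace F] (c : ℝ)
    (hK : IsCompact K) (hs : tsupport g ⊆ K ×ˢ Set.univ) (hg : ContDiff ℝ 2 g) (p : V3 × ℝ) :
    ∑ i, delayIntegral volume (fun z => (norm3 z)⁻¹) (fun z => c * norm3 z)
        (dirDeriv (Pi.single i 1, 0) (dirDeriv (Pi.single i 1, 0) g)) p =
      c ^ 2 • delayIntegral volume (fun z => (norm3 z)⁻¹) (fun z => c * norm3 z)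
          (dirDeriv (0, 1) (dirDeriv (0, 1) g)) p - (4 * π) • g p := by
  have hs' {f : V3 × ℝ → F} (hf : tsupport f ⊆ K ×ˢ Set.univ) (w : V3 × ℝ) :
      tsupport (dirDeriv w f) ⊆ K ×ˢ Set.univ := (tsupport_dirDeriv_subset w).trans hf
  have hg₁ (w : V3 × ℝ) : ContDiff ℝ 1 (dirDeriv w g) :=
    contDiff_dirDeriv hg one_add_one_eq_two.le w
  have hg₂ (w : V3 × ℝ) : Continuous (dirDeriv w (dirDeriv w g)) :=
    (contDiff_dirDeriv (m := 0) (hg₁ w) (by simp) w).continuous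
  have hspace := tendsto_finsetSum Finset.univ fun i _ =>
    tendsto_delayIntegral_softNorm3_inv c hK (hs' (hs' hs (Pi.single i 1, 0)) _) (hg₂ _) p
  have hsource₅ := tendsto_delayIntegral_sq_div_softNorm3_pow_five c hK hs hg.continuous p
  have hsources := (hsource₅.neg.sub
    ((tendsto_delayIntegral_sq_div_softNorm3_pow_four c hK (hs' hs (0, 1))
      (hg₁ _).continuous p).const_smul c)).add
    ((tendsto_delayIntegral_dot3_div_softNorm3_pow_three c hK (hs' (hs' hs (0, 1)) _)
      (hg₂ _) p).const_smul (c ^ 2))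
  have hbalance := tendsto_nhds_unique_of_eventuallyEq hspace hsources ?_
  · rw [hbalance, smul_zero, sub_zero, neg_add_eq_sub]
  · filter_upwards [self_mem_nhdsWithin] with δ (hδ : 0 < δ)
    exact sum_delayIntegral_softNorm3_inv_dirDeriv_dirDeriv hδ.ne' c hK hs hg p

end SingularLimit

section PartialDerivatives

variable {F : Type*} [NormedAddCommGroup F] [NormedSpace ℝ F] {f : V3 × ℝ → F}

lemma pdS_eq_dirDeriv (hf : Differentiable ℝ f) (i : Fin 3) :
    pdS i f = dirDeriv (Pi.single i 1, 0) f := by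
  ext p
  have hd : HasFDerivAt (fun y => f (y, p.2)) _ p.1 :=
    (hf p).hasFDerivAt.comp p.1 (hasFDerivAt_prodMk_left p.1 p.2)
  rw [pdS, hd.fderiv]
  rfl

lemma pdT_eq_dirDeriv (hf : Differentiable ℝ f) : pdT f = dirDeriv (0, 1) f := by
  ext p
  have hd : HasDerivAt (fun s => f (p.1, s)) _ p.2 :=
    (hf p).hasFDerivAt.comp_hasDerivAt p.2 ((hasDerivAt_const p.2 p.1).prodMk (hasDerivAt_id p.2))
  rw [pdT, hd.deriv]
  rfl

lemma lap_eq_sum_dirDeriv (hf : ContDiff ℝ 2 f) :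
    lap f = fun p => ∑ i, dirDeriv (Pi.single i 1, 0) (dirDeriv (Pi.single i 1, 0) f) p := by
  have hf' (v : V3 × ℝ) : Differentiable ℝ (dirDeriv v f) :=
    (contDiff_dirDeriv hf one_add_one_eq_two.le v).differentiable one_ne_zero
  ext p
  simp only [lap, pdS_eq_dirDeriv (hf.differentiable two_ne_zero), pdS_eq_dirDeriv (hf' _)]

lemma pdT_pdT_eq_dirDeriv (hf : ContDiff ℝ 2 f) :
    pdT (pdT f) = dirDeriv (0, 1) (dirDeriv (0, 1) f) := by
  rw [pdT_eq_dirDeriv (hf.differentiable two_ne_zero), pdT_eq_dirDeriv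
    ((contDiff_dirDeriv hf one_add_one_eq_two.le _).differentiable one_ne_zero)]

end PartialDerivatives

section RetardedPotential

variable {ρ : V3 × ℝ → ℝ} {K : Set V3}

lemma continuous_norm3 : Continuous norm3 := by
  rw [← softNorm3_zero]
  exact continuous_softNorm3.comp (.prodMk_right 0)

lemma locallyIntegrable_norm3_inv : LocallyIntegrable fun z : V3 => (norm3 z)⁻¹ := by
  have hnorm := locallyIntegrable_norm_pow_inv (E := V3) volume (m := 1) (by simp)
  refine hnorm.mono continuous_norm3.measurable.inv.aestronglyMeasurable ?_
  filter_upwards [Measure.ae_ne volume 0] with z hz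
  have := norm_pos_iff.2 hz
  rw [norm_of_nonneg (inv_nonneg.2 (norm3_pos hz).le), pow_one, norm_inv, norm_norm,
    ← softNorm3_zero]
  gcongr
  exact norm_le_softNorm3 0 z

lemma tsupport_subset_prod_univ {X Y Z : Type*} [TopologicalSpace X] [TopologicalSpace Y] [Zero Z]
    {f : X × Y → Z} {S : Set X} (hS : IsClosed S)
    (hf : ∀ t, (Function.support fun y => f (y, t)) ⊆ S) : tsupport f ⊆ S ×ˢ Set.univ :=
  closure_minimal (fun p hp => ⟨hf p.2 hp, trivial⟩) (hS.prod isClosed_univ)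

lemma Vret_eq_smul_delayIntegral (C ε₀ : ℝ) (ρ : V3 × ℝ → ℝ) :
    Vret C ε₀ ρ = fun p => (1 / (4 * π * ε₀)) •
      delayIntegral volume (fun z => (norm3 z)⁻¹) (fun z => C⁻¹ * norm3 z) ρ p := by
  ext p
  rw [Vret, smul_eq_mul, delayIntegral, ← integral_sub_left_eq_self _ volume p.1]
  simp only [sub_sub_cancel, div_eq_inv_mul, Prod.sub_def, smul_eq_mul]

lemma dirDeriv_dirDeriv_Vret (C ε₀ : ℝ) (hρ : ContDiff ℝ 2 ρ) (hK : IsCompact K)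
    (hs : tsupport ρ ⊆ K ×ˢ Set.univ) (v : V3 × ℝ) :
    dirDeriv v (dirDeriv v (Vret C ε₀ ρ)) = Vret C ε₀ (dirDeriv v (dirDeriv v ρ)) := by
  have hdelay : Continuous fun z => C⁻¹ * norm3 z := continuous_norm3.const_mul C⁻¹
  simp only [Vret_eq_smul_delayIntegral, dirDeriv_const_smul]
  rw [dirDeriv_delayIntegral locallyIntegrable_norm3_inv hdelay hK hs (hρ.of_le one_le_two),
    dirDeriv_delayIntegral locallyIntegrable_norm3_inv hdelay hK
      ((tsupport_dirDeriv_subset v).trans hs) (contDiff_dirDeriv hρ one_add_one_eq_two.le v)]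

lemma contDiff_Vret (C ε₀ : ℝ) {n : ℕ∞} (hρ : ContDiff ℝ n ρ) (hK : IsCompact K)
    (hs : tsupport ρ ⊆ K ×ˢ Set.univ) : ContDiff ℝ n (Vret C ε₀ ρ) := by
  rw [Vret_eq_smul_delayIntegral]
  exact (contDiff_delayIntegral locallyIntegrable_norm3_inv (continuous_norm3.const_mul C⁻¹)
    hK hs hρ).const_smul _

lemma sum_Vret_dirDeriv_dirDeriv (C ε₀ : ℝ) (hρ : ContDiff ℝ 2 ρ) (hK : IsCompact K)
    (hs : tsupport ρ ⊆ K ×ˢ Set.univ) (p : V3 × ℝ) :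
    ∑ i, Vret C ε₀ (dirDeriv (Pi.single i 1, 0) (dirDeriv (Pi.single i 1, 0) ρ)) p =
      1 / C ^ 2 * Vret C ε₀ (dirDeriv (0, 1) (dirDeriv (0, 1) ρ)) p - ρ p / ε₀ := by
  simp only [Vret_eq_smul_delayIntegral]
  rw [← Finset.smul_sum, sum_delayIntegral_norm3_inv_dirDeriv_dirDeriv C⁻¹ hK hs hρ]
  simp only [smul_eq_mul]
  field_simp

end RetardedPotential

theorem retarded_scalar_potential_wave_equation_general {C ε₀ : ℝ} (_hC : C ≠ 0) (_hε : ε₀ ≠ 0)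
    {n : ℕ∞} (hn : (2 : WithTop ℕ∞) ≤ n) {ρ : V3 × ℝ → ℝ} (hρ : ContDiff ℝ n ρ) {K : Set V3}
    (hK : IsCompact K) (hsupp : ∀ t : ℝ, (Function.support fun y => ρ (y, t)) ⊆ K) :
    ContDiff ℝ n (Vret C ε₀ ρ) ∧
    ∀ p : V3 × ℝ,
      lap (Vret C ε₀ ρ) p - (1 / C ^ 2) * pdT (pdT (Vret C ε₀ ρ)) p = -(ρ p / ε₀) := by
  have hs : tsupport ρ ⊆ K ×ˢ Set.univ := tsupport_subset_prod_univ hK.isClosed hsupp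
  have hρ₂ : ContDiff ℝ 2 ρ := hρ.of_le hn
  have hV : ContDiff ℝ n (Vret C ε₀ ρ) := contDiff_Vret C ε₀ hρ hK hs
  have hV₂ : ContDiff ℝ 2 (Vret C ε₀ ρ) := hV.of_le hn
  refine ⟨hV, fun p => ?_⟩
  rw [lap_eq_sum_dirDeriv hV₂, pdT_pdT_eq_dirDeriv hV₂]
  simp only [dirDeriv_dirDeriv_Vret C ε₀ hρ₂ hK hs, sum_Vret_dirDeriv_dirDeriv C ε₀ hρ₂ hK hs]
  ring

/-- The retarded scalar potential is twice differentiable and satisfies the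
inhomogeneous wave equation `ΔV − (1/C²) ∂²V/∂t² = −ρ/ε₀`. -/
theorem retarded_scalar_potential_wave_equation
    (C ε₀ : ℝ) (hC : 0 < C) (hε : 0 < ε₀)
    (ρ : V3 × ℝ → ℝ) (hρ : ContDiff ℝ (⊤ : ℕ∞) ρ)
    (K : Set V3) (hK : IsCompact K)
    (hsupp : ∀ t : ℝ, (Function.support fun y => ρ (y, t)) ⊆ K) :
    ContDiff ℝ (2 : ℕ∞) (Vret C ε₀ ρ) ∧
    ∀ p : V3 × ℝ,
      lap (Vret C ε₀ ρ) p - (1 / C ^ 2) * pdT (pdT (Vret C ε₀ ρ)) p = -(ρ p / ε₀) :=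
  retarded_scalar_potential_wave_equation_general hC.ne' hε.ne' le_rfl
    (hρ.of_le (WithTop.coe_le_coe.2 le_top)) hK hsupp
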